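/- Let k be an algebraically closed field of characteristic 0 and let F ∈ k[x_0,x_1,x_2,x_3] be an irreducible homogeneous polynomial of degree d ≥ 2 defining the non-linear integral surface Z = {F = 0} ⊂ P^3. Suppose that for every nonzero x ∈ k^4 with F(x) = 0, either there exist two distinct 2-dimensional k-linear subspaces L_1 ≠ L_2 of k^4, each containing x, on each of which F vanishes identically, or there exists a 2-dimensional k-linear subspace L of k^4 containing x on which F and all four partial derivatives ∂F/∂x_i vanish identically (a line in the singular locus of Z). Then d = 2 and Z is non-singular: for every nonzero x ∈ k^4 with F(x) = 0, some partial derivative ∂F/∂x_i does not vanish at x. -/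

import Mathlib

open MvPolynomial

/-!
Infinitely many lines of the irreducible surface `Z = {F = 0}` cannot lie on a second surface
`{G = 0}` unless `F ∣ G`, because a curve contains only finitely many lines. Moreover `Z` contains
no plane, and all lines of `Z` through a smooth point lie in the tangent plane, so there are at most
`d` of them.

Let `L` be a line of `Z` through a smooth point. The second lines through its smooth points form an
infinite family of lines of `Z` meeting `L`. The points of `Z` on lines of `Z` that meet `L` form a
closed set by elimination theory, so every point of `Z` lies on a line of `Z` meeting `L`. Fix
`2 * d + 1` such lines `L`. Through a smooth point `y` of `Z` there pass at most `d` lines, so some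
line of `Z` through `y` meets three of the fixed ones. If `d > 2`, this is impossible on general
lines of `Z`: only finitely many lines of `Z` meet three given ones, since such a line lies on the
quadric through these three, unless it passes through an intersection point of two of them, and only
finitely many lines pass through any point of `Z` as `Z` is not a cone with singular vertex. Hence
`d = 2`. A singular quadric is a cone with singular vertex, so `Z` is smooth.
-/

section Polynomials

variable {k σ τ : Type*} [Field k]

lemma dvd_of_forall_eval_eq_zero [IsAlgClosed k] [Finite σ] {F G : MvPolynomial σ k}
    (hF : Irreducible F) (h : ∀ x, eval x F = 0 → eval x G = 0) : F ∣ G := by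
  have hprime : (Ideal.span {F}).IsPrime := (Ideal.span_singleton_prime hF.ne_zero).2 hF.prime
  rw [← Ideal.mem_span_singleton, ← IsPrime.vanishingIdeal_zeroLocus (K := k) (Ideal.span {F}),
    mem_vanishingIdeal_iff]
  intro x hx
  rw [mem_zeroLocus_iff] at hx
  simpa only [aeval_eq_eval] using
    h x (by simpa only [aeval_eq_eval] using hx F (Ideal.mem_span_singleton_self F))

lemma eval_smul_of_isHomogeneous {p : MvPolynomial σ k} {n : ℕ} (hp : p.IsHomogeneous n) (t : k)
    (x : σ → k) : eval (t • x) p = t ^ n * eval x p := by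
  rw [eval_eq, eval_eq, Finset.mul_sum]
  refine Finset.sum_congr rfl fun m hm => ?_
  rw [hp.degree_eq_sum_deg_support hm]
  simp only [Pi.smul_apply, smul_eq_mul, mul_pow, Finset.prod_mul_distrib,
    Finset.prod_pow_eq_pow_sum]
  ring

lemma eval_homogeneousComponent_eq_zero [Infinite k] {p : MvPolynomial σ k} {x : σ → k}
    (hp : ∀ t : k, eval (t • x) p = 0) (n : ℕ) : eval x (homogeneousComponent n p) = 0 := by
  let q : Polynomial k := ∑ j ∈ Finset.range (p.totalDegree + 1),
    Polynomial.monomial j (eval x (homogeneousComponent j p))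
  have hq : q = 0 := Polynomial.funext fun t => by
    rw [Polynomial.eval_zero, ← hp t]
    conv_rhs => rw [← sum_homogeneousComponent p, map_sum]
    simp only [q, Polynomial.eval_finsetSum, Polynomial.eval_monomial,
      eval_smul_of_isHomogeneous (homogeneousComponent_isHomogeneous _ p), mul_comm]
  rcases lt_or_ge p.totalDegree n with hn | hn
  · rw [homogeneousComponent_eq_zero _ _ hn, map_zero]
  · have hcoeff : q.coeff n = eval x (homogeneousComponent n p) := by
      simp [q, Polynomial.finsetSum_coeff, Polynomial.coeff_monomial, Nat.lt_succ_of_le hn]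
    rw [← hcoeff, hq, Polynomial.coeff_zero]

/-- The linear functional `ℓ` on `k ^ σ`, as a polynomial in the coordinates. -/
noncomputable def linearForm [Fintype σ] (ℓ : Module.Dual k (σ → k)) : MvPolynomial σ k :=
  ∑ i, C (ℓ (Pi.basisFun k σ i)) * X i

lemma eval_linearForm [Fintype σ] (ℓ : Module.Dual k (σ → k)) (x : σ → k) :
    eval x (linearForm ℓ) = ℓ x := by
  conv_rhs => rw [← (Pi.basisFun k σ).sum_repr x, map_sum]
  simp [linearForm, mul_comm]

lemma isHomogeneous_linearForm [Fintype σ] (ℓ : Module.Dual k (σ → k)) :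
    (linearForm ℓ).IsHomogeneous 1 :=
  IsHomogeneous.sum _ _ _ fun _ _ => isHomogeneous_C_mul_X _ _

lemma linearForm_ne_zero [Fintype σ] {ℓ : Module.Dual k (σ → k)} (hℓ : ℓ ≠ 0) :
    linearForm ℓ ≠ 0 := by
  contrapose! hℓ
  ext1 x
  rw [← eval_linearForm, hℓ, map_zero, LinearMap.zero_apply]

lemma irreducible_linearForm [Fintype σ] {ℓ : Module.Dual k (σ → k)} (hℓ : ℓ ≠ 0) :
    Irreducible (linearForm ℓ) := by
  have hne := linearForm_ne_zero hℓ
  refine irreducible_of_totalDegree_eq_one ((isHomogeneous_linearForm ℓ).totalDegree hne)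
    fun c hc => isUnit_iff_ne_zero.2 ?_
  rintro rfl
  exact hne (MvPolynomial.ext _ _ fun m => zero_dvd_iff.1 (hc m))

/-- The substitution of the coordinates of the linear map `f` into polynomials, that is, the
restriction of polynomial functions along `f`. -/
noncomputable def linearPullback [Fintype τ] (f : (τ → k) →ₗ[k] (σ → k)) :
    MvPolynomial σ k →ₐ[k] MvPolynomial τ k :=
  aeval fun i => linearForm (LinearMap.proj i ∘ₗ f)

lemma eval_linearPullback [Fintype τ] (f : (τ → k) →ₗ[k] (σ → k)) (p : MvPolynomial σ k)
    (v : τ → k) : eval v (linearPullback f p) = eval (f v) p := by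
  have h := comp_aeval_apply (fun i => linearForm (LinearMap.proj i ∘ₗ f)) (aeval v) p
  simp only [aeval_eq_eval, eval_linearForm] at h
  exact h

lemma isHomogeneous_linearPullback [Fintype τ] (f : (τ → k) →ₗ[k] (σ → k))
    {p : MvPolynomial σ k} {n : ℕ} (hp : p.IsHomogeneous n) :
    (linearPullback f p).IsHomogeneous n :=
  one_mul n ▸ hp.aeval _ fun _ => isHomogeneous_linearForm _

lemma vanishingIdeal_range [Infinite k] [Fintype τ] (f : (τ → k) →ₗ[k] (σ → k)) :
    vanishingIdeal k (LinearMap.range f : Set (σ → k)) = RingHom.ker (linearPullback f) := by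
  ext p
  simp only [mem_vanishingIdeal_iff, LinearMap.coe_range, Set.forall_mem_range, RingHom.mem_ker,
    aeval_eq_eval, ← eval_linearPullback]
  exact ⟨fun h => MvPolynomial.funext (by simpa using h), fun h => by simp [h]⟩

lemma linearPullback_surjective [Infinite k] [Finite σ] [Fintype τ] {f : (τ → k) →ₗ[k] (σ → k)}
    (hf : Function.Injective f) : Function.Surjective (linearPullback f) := by
  have := Fintype.ofFinite σ
  obtain ⟨g, hg⟩ := f.exists_leftInverse_of_injective (LinearMap.ker_eq_bot.2 hf)
  refine fun q => ⟨linearPullback g q, MvPolynomial.funext fun v => ?_⟩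
  rw [eval_linearPullback, eval_linearPullback, ← LinearMap.comp_apply, hg, LinearMap.id_apply]

lemma exists_injective_range_eq [Finite σ] (W : Submodule k (σ → k)) :
    ∃ f : (Fin (Module.finrank k W) → k) →ₗ[k] (σ → k),
      Function.Injective f ∧ LinearMap.range f = W :=
  ⟨W.subtype ∘ₗ (Module.finBasis k W).equivFun.symm.toLinearMap,
    W.injective_subtype.comp (LinearEquiv.injective _), by
      rw [LinearMap.range_comp, LinearEquiv.range, Submodule.map_top, Submodule.range_subtype]⟩

end Polynomials

section LinearSubvarieties

variable {k σ : Type*} [Field k]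

lemma ringKrullDim_quotient_succ_le_of_lt {R : Type*} [CommRing R] {I J : Ideal R} [I.IsPrime]
    (hIJ : I < J) : ringKrullDim (R ⧸ J) + 1 ≤ ringKrullDim (R ⧸ I) := by
  obtain ⟨r, hrJ, hrI⟩ := SetLike.exists_of_lt hIJ
  refine ringKrullDim_succ_le_of_surjective (Ideal.Quotient.factor hIJ.le)
    (Ideal.Quotient.factor_surjective hIJ.le) (r := Ideal.Quotient.mk I r) ?_ ?_
  · rwa [mem_nonZeroDivisors_iff_ne_zero, Ne, Ideal.Quotient.eq_zero_iff_mem]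
  · rwa [Ideal.Quotient.factor_mk, Ideal.Quotient.eq_zero_iff_mem]

lemma ringKrullDim_quotient_add_three_le {R : Type*} [CommRing R] [IsDomain R] {F G : R}
    (hF : Prime F) (hFG : ¬ F ∣ G) {P Q : Ideal R} [P.IsPrime] (hFP : F ∈ P) (hGP : G ∈ P)
    (hPQ : P < Q) : ringKrullDim (R ⧸ Q) + 3 ≤ ringKrullDim R := by
  have hF_prime : (Ideal.span {F}).IsPrime := (Ideal.span_singleton_prime hF.ne_zero).2 hF
  have hbot_lt : ⊥ < Ideal.span {F} := bot_lt_iff_ne_bot.2 (by simpa using hF.ne_zero)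
  have hF_lt : Ideal.span {F} < P := by
    refine lt_of_le_of_ne ((Ideal.span_singleton_le_iff_mem P).2 hFP) ?_
    rintro rfl
    exact hFG (Ideal.mem_span_singleton.1 hGP)
  calc ringKrullDim (R ⧸ Q) + 3
      = ringKrullDim (R ⧸ Q) + 1 + 1 + 1 := by simp only [add_assoc]; norm_num
    _ ≤ ringKrullDim (R ⧸ P) + 1 + 1 := by
        gcongr; exact ringKrullDim_quotient_succ_le_of_lt hPQ
    _ ≤ ringKrullDim (R ⧸ Ideal.span {F}) + 1 := by
        gcongr; exact ringKrullDim_quotient_succ_le_of_lt hF_lt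
    _ ≤ ringKrullDim (R ⧸ (⊥ : Ideal R)) := ringKrullDim_quotient_succ_le_of_lt hbot_lt
    _ = ringKrullDim R := ringKrullDim_eq_of_ringEquiv (RingEquiv.quotientBot R)

variable [Finite σ] (W : Submodule k (σ → k))

lemma isPrime_vanishingIdeal_submodule [Infinite k] :
    (vanishingIdeal k (W : Set (σ → k))).IsPrime := by
  obtain ⟨f, -, hf⟩ := exists_injective_range_eq W
  rw [← hf, vanishingIdeal_range]
  exact RingHom.ker_isPrime _

lemma ringKrullDim_quotient_vanishingIdeal_submodule [Infinite k] :
    ringKrullDim (MvPolynomial σ k ⧸ vanishingIdeal k (W : Set (σ → k))) =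
      Module.finrank k W := by
  have := Fintype.ofFinite σ
  obtain ⟨f, hf_inj, hf⟩ := exists_injective_range_eq W
  rw [← hf, vanishingIdeal_range, hf,
    ringKrullDim_eq_of_ringEquiv (Ideal.quotientKerAlgEquivOfSurjective
      (linearPullback_surjective hf_inj)).toRingEquiv,
    MvPolynomial.ringKrullDim_of_isNoetherianRing, ringKrullDim_eq_zero_of_field, Nat.card_fin,
    zero_add]

variable {W} in
lemma mem_of_forall_mem_vanishingIdeal {x : σ → k}
    (hx : ∀ p ∈ vanishingIdeal k (W : Set (σ → k)), eval x p = 0) : x ∈ W := by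
  have := Fintype.ofFinite σ
  by_contra hxW
  obtain ⟨ℓ, hℓx, hℓW⟩ := W.exists_le_ker_of_notMem hxW
  refine hℓx ?_
  rw [← eval_linearForm]
  refine hx _ (mem_vanishingIdeal_iff.2 fun y hy => ?_)
  rw [aeval_eq_eval, eval_linearForm]
  exact hℓW hy

lemma vanishingIdeal_submodule_injective :
    Function.Injective fun W : Submodule k (σ → k) => vanishingIdeal k (W : Set (σ → k)) := by
  have le_of_eq : ∀ W W' : Submodule k (σ → k),
      vanishingIdeal k (W : Set (σ → k)) = vanishingIdeal k (W' : Set (σ → k)) → W ≤ W' :=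
    fun W W' h x hx => mem_of_forall_mem_vanishingIdeal fun p hp =>
      mem_vanishingIdeal_iff.1 (h ▸ hp) x hx
  exact fun W W' h => le_antisymm (le_of_eq W W' h) (le_of_eq W' W h.symm)

lemma vanishingIdeal_mem_minimalPrimes [Infinite k] {F G : MvPolynomial σ k} (hF : Irreducible F)
    (hFG : ¬ F ∣ G) (hW : Module.finrank k W + 2 = Nat.card σ) (hWF : ∀ y ∈ W, eval y F = 0)
    (hWG : ∀ y ∈ W, eval y G = 0) :
    vanishingIdeal k (W : Set (σ → k)) ∈ (Ideal.span {F, G}).minimalPrimes := by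
  have hprime := isPrime_vanishingIdeal_submodule W
  have hspan : Ideal.span {F, G} ≤ vanishingIdeal k (W : Set (σ → k)) := by
    rw [Ideal.span_le, Set.pair_subset_iff]
    exact ⟨mem_vanishingIdeal_iff.2 hWF, mem_vanishingIdeal_iff.2 hWG⟩
  obtain ⟨P, hP, hPW⟩ := Ideal.exists_minimalPrimes_le hspan
  obtain rfl | hlt := hPW.eq_or_lt
  · exact hP
  have hP_prime : P.IsPrime := hP.1.1
  have hdim := ringKrullDim_quotient_add_three_le hF.prime hFG
    (hP.1.2 (Ideal.subset_span (by simp))) (hP.1.2 (Ideal.subset_span (by simp))) hlt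
  rw [ringKrullDim_quotient_vanishingIdeal_submodule, MvPolynomial.ringKrullDim_of_isNoetherianRing,
    ringKrullDim_eq_zero_of_field, zero_add, ← hW] at hdim
  norm_cast at hdim
  omega

lemma finite_setOf_vanish_of_not_dvd [Infinite k] {F G : MvPolynomial σ k} (hF : Irreducible F)
    (hFG : ¬ F ∣ G) :
    {W : Submodule k (σ → k) | Module.finrank k W + 2 = Nat.card σ ∧
      (∀ y ∈ W, eval y F = 0) ∧ ∀ y ∈ W, eval y G = 0}.Finite :=
  ((Ideal.span {F, G}).finite_minimalPrimes_of_isNoetherianRing _).of_injOn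
    (fun W ⟨hW, hWF, hWG⟩ => vanishingIdeal_mem_minimalPrimes W hF hFG hW hWF hWG)
    vanishingIdeal_submodule_injective.injOn

end LinearSubvarieties

section Hyperplanes

variable {k σ : Type*} [Field k]

lemma exists_ker_eq_of_finrank_add_one_eq {V : Type*} [AddCommGroup V] [Module k V]
    [FiniteDimensional k V] {H : Submodule k V}
    (hH : Module.finrank k H + 1 = Module.finrank k V) :
    ∃ ℓ : Module.Dual k V, ℓ ≠ 0 ∧ LinearMap.ker ℓ = H := by
  have hlt : H < ⊤ := lt_top_iff_ne_top.2 (by rintro rfl; simp at hH)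
  obtain ⟨ℓ, hℓ, hHℓ⟩ := H.exists_le_ker_of_lt_top hlt
  refine ⟨ℓ, hℓ, (Submodule.eq_of_le_of_finrank_eq hHℓ ?_).symm⟩
  have := Module.Dual.finrank_ker_add_one_of_ne_zero hℓ
  omega

lemma linearForm_dvd_of_forall_mem_ker [IsAlgClosed k] [Fintype σ] {ℓ : Module.Dual k (σ → k)}
    (hℓ : ℓ ≠ 0) {P : MvPolynomial σ k} (hP : ∀ y ∈ LinearMap.ker ℓ, eval y P = 0) :
    linearForm ℓ ∣ P :=
  dvd_of_forall_eval_eq_zero (irreducible_linearForm hℓ) fun x hx =>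
    hP x (by rwa [eval_linearForm] at hx)

lemma card_le_totalDegree_of_vanish_on_hyperplanes [IsAlgClosed k] [Finite σ]
    {P : MvPolynomial σ k} (hP : P ≠ 0) {S : Finset (Submodule k (σ → k))}
    (hS : ∀ H ∈ S, Module.finrank k H + 1 = Module.finrank k (σ → k) ∧ ∀ y ∈ H, eval y P = 0) :
    S.card ≤ P.totalDegree := by
  have := Fintype.ofFinite σ
  choose! ℓ hℓ_ne hℓ_ker using fun H hH => exists_ker_eq_of_finrank_add_one_eq (hS H hH).1
  have hdvd : ∏ H ∈ S, linearForm (ℓ H) ∣ P := by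
    refine Finset.prod_dvd_of_isRelPrime (fun H hH H' hH' hne => ?_) fun H hH =>
      linearForm_dvd_of_forall_mem_ker (hℓ_ne H hH) ((hℓ_ker H hH).symm ▸ (hS H hH).2)
    rw [Function.onFun, (irreducible_linearForm (hℓ_ne H hH)).isRelPrime_iff_not_dvd]
    rintro ⟨c, hc⟩
    refine hne (Submodule.eq_of_le_of_finrank_eq (fun x hx => ?_) ?_)
    · rw [← hℓ_ker H hH, LinearMap.mem_ker] at hx
      rw [← hℓ_ker H' hH', LinearMap.mem_ker, ← eval_linearForm, hc, map_mul, eval_linearForm, hx,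
        zero_mul]
    · have := (hS H hH).1; have := (hS H' hH').1; omega
  have hhom : (∏ H ∈ S, linearForm (ℓ H)).IsHomogeneous (∑ _ ∈ S, 1) :=
    IsHomogeneous.prod _ _ _ fun _ _ => isHomogeneous_linearForm _
  have hne : ∏ H ∈ S, linearForm (ℓ H) ≠ 0 :=
    Finset.prod_ne_zero_iff.2 fun H hH => linearForm_ne_zero (hℓ_ne H hH)
  rw [Finset.card_eq_sum_ones, ← hhom.totalDegree hne]
  exact totalDegree_le_of_dvd_of_isDomain hdvd hP

lemma card_le_of_vanish_on_codim_one [IsAlgClosed k] [Finite σ] {F : MvPolynomial σ k} {d : ℕ}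
    (hF : F.IsHomogeneous d) {W : Submodule k (σ → k)} (hW : ∃ y ∈ W, eval y F ≠ 0)
    {S : Finset (Submodule k (σ → k))}
    (hS : ∀ H ∈ S, H ≤ W ∧ Module.finrank k H + 1 = Module.finrank k W ∧ ∀ y ∈ H, eval y F = 0) :
    S.card ≤ d := by
  classical
  have := Fintype.ofFinite σ
  obtain ⟨f, hf_inj, hf⟩ := exists_injective_range_eq W
  have hne : linearPullback f F ≠ 0 := by
    obtain ⟨y, hyW, hy⟩ := hW
    obtain ⟨v, rfl⟩ := LinearMap.mem_range.1 (hf ▸ hyW)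
    rw [← eval_linearPullback] at hy
    exact fun h => hy (by rw [h, map_zero])
  have hmap : ∀ H ∈ S, (H.comap f).map f = H := fun H hH => by
    rw [Submodule.map_comap_eq, hf, inf_eq_right.2 (hS H hH).1]
  have hcard : (S.image (Submodule.comap f)).card = S.card :=
    Finset.card_image_of_injOn fun H hH H' hH' h => by
      rw [← hmap H hH, ← hmap H' hH', h]
  rw [← hcard, ← (isHomogeneous_linearPullback f hF).totalDegree hne]
  refine card_le_totalDegree_of_vanish_on_hyperplanes hne fun H' hH' => ?_
  obtain ⟨H, hH, rfl⟩ := Finset.mem_image.1 hH'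
  refine ⟨?_, fun v hv => by rw [eval_linearPullback]; exact (hS H hH).2.2 _ hv⟩
  have hfinrank := (Submodule.equivMapOfInjective f hf_inj (H.comap f)).finrank_eq
  rw [hmap H hH] at hfinrank
  rw [hfinrank, (hS H hH).2.1, Module.finrank_fin_fun]

lemma exists_mem_eval_ne_zero_of_finrank_add_one_eq [IsAlgClosed k] [Finite σ]
    {F : MvPolynomial σ k} (hF : Irreducible F) (hdeg : F.totalDegree ≠ 1)
    {H : Submodule k (σ → k)} (hH : Module.finrank k H + 1 = Module.finrank k (σ → k)) :
    ∃ y ∈ H, eval y F ≠ 0 := by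
  have := Fintype.ofFinite σ
  by_contra! hHF
  obtain ⟨ℓ, hℓ, rfl⟩ := exists_ker_eq_of_finrank_add_one_eq hH
  have hassoc := (irreducible_linearForm hℓ).associated_of_dvd hF
    (linearForm_dvd_of_forall_mem_ker hℓ hHF)
  refine hdeg ?_
  rw [← (isHomogeneous_linearForm ℓ).totalDegree (linearForm_ne_zero hℓ)]
  exact le_antisymm
    (totalDegree_le_of_dvd_of_isDomain hassoc.symm.dvd (linearForm_ne_zero hℓ))
    (totalDegree_le_of_dvd_of_isDomain hassoc.dvd hF.ne_zero)

end Hyperplanes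

section Elimination

variable {k σ τ : Type*} [Field k]

lemma eval_homogeneousComponent_eq_sum [Fintype σ] [DecidableEq σ] {R : Type*} [CommRing R]
    (p : MvPolynomial σ R) (n : ℕ) (w : σ → R) :
    eval w (homogeneousComponent n p) =
      ∑ s ∈ Finset.univ.finsuppAntidiag n, coeff s p * ∏ i, w i ^ s i := by
  have hmem : ∀ s : σ →₀ ℕ, s ∈ Finset.univ.finsuppAntidiag n ↔ s.degree = n := fun s => by
    simp [Finset.mem_finsuppAntidiag, Finsupp.degree_eq_sum]
  rw [homogeneousComponent_apply, map_sum]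
  simp only [eval_monomial, Finsupp.prod_pow]
  refine Finset.sum_subset (fun s hs => (hmem s).2 (Finset.mem_filter.1 hs).2) fun s hs hs' => ?_
  have : coeff s p = 0 := by
    by_contra h
    exact hs' (Finset.mem_filter.2 ⟨mem_support_iff.2 h, (hmem s).1 hs⟩)
  rw [this, zero_mul]

lemma exists_pow_idealOfVars_le_of_zeroLocus_subset [IsAlgClosed k] [Finite σ]
    {I : Ideal (MvPolynomial σ k)} (hI : zeroLocus k I ⊆ {0}) :
    ∃ n, idealOfVars σ k ^ n ≤ I := by
  refine Ideal.exists_pow_le_of_le_radical_of_fg ?_ (idealOfVars_fg σ k)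
  rw [← vanishingIdeal_zeroLocus_eq_radical (K := k), idealOfVars, Ideal.span_le]
  rintro _ ⟨i, rfl⟩
  refine mem_vanishingIdeal_iff.2 fun w hw => ?_
  rw [hI hw, aeval_X, Pi.zero_apply]

lemma eval_map_smul_eq_zero_of_mem_span {ι : Type*} {f : ι → MvPolynomial σ (MvPolynomial τ k)}
    {n : ι → ℕ} (hf : ∀ j, (f j).IsHomogeneous (n j)) {x : τ → k} {w : σ → k}
    (hw : ∀ j, eval w (map (eval x) (f j)) = 0) {P : MvPolynomial σ (MvPolynomial τ k)}
    (hP : P ∈ Ideal.span (Set.range f)) (t : k) : eval (t • w) (map (eval x) P) = 0 := by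
  suffices Ideal.span (Set.range f) ≤ RingHom.ker ((eval (t • w)).comp (map (eval x))) from this hP
  rw [Ideal.span_le]
  rintro _ ⟨j, rfl⟩
  change eval (t • w) (map (eval x) (f j)) = 0
  rw [eval_smul_of_isHomogeneous ((hf j).map _), hw j, mul_zero]

lemma exists_mem_span_map_eq_monomial [IsAlgClosed k] [Finite σ] {ι : Type*}
    {f : ι → MvPolynomial σ (MvPolynomial τ k)} {x₀ : τ → k}
    (hx₀ : ∀ w, (∀ j, eval w (map (eval x₀) (f j)) = 0) → w = 0) :
    ∃ N, ∀ s : σ →₀ ℕ, s.degree = N →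
      ∃ P ∈ Ideal.span (Set.range f), map (eval x₀) P = monomial s 1 := by
  obtain ⟨N, hN⟩ := exists_pow_idealOfVars_le_of_zeroLocus_subset
    (I := (Ideal.span (Set.range f)).map (map (eval x₀))) fun w hw => hx₀ w fun j =>
      hw _ (Ideal.mem_map_of_mem _ (Ideal.subset_span ⟨j, rfl⟩))
  have hsurj : Function.Surjective (map (σ := σ) (eval x₀)) :=
    map_surjective _ fun c => ⟨C c, eval_C c⟩
  refine ⟨N, fun s hs => (Ideal.mem_map_iff_of_surjective _ hsurj).1 (hN ?_)⟩
  exact (monomial_mem_pow_idealOfVars_iff _ _ one_ne_zero).2 hs.ge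

/-- The main theorem of elimination theory. The ideal of the forms specialised at `x₀` contains all
monomials of some degree `N`; lifting these memberships gives a square matrix over `k[τ]` that is
the identity at `x₀` and, wherever `w` is a common zero, kills the vector of the degree `N`
monomials in `w`. Its determinant is `G`. -/
theorem exists_eval_ne_zero_of_no_common_zero [IsAlgClosed k] [Finite σ] {ι : Type*}
    {f : ι → MvPolynomial σ (MvPolynomial τ k)} {n : ι → ℕ} (hf : ∀ j, (f j).IsHomogeneous (n j))
    {x₀ : τ → k} (hx₀ : ∀ w, (∀ j, eval w (map (eval x₀) (f j)) = 0) → w = 0) :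
    ∃ G : MvPolynomial τ k, eval x₀ G ≠ 0 ∧
      ∀ x w, w ≠ 0 → (∀ j, eval w (map (eval x) (f j)) = 0) → eval x G = 0 := by
  classical
  have := Fintype.ofFinite σ
  obtain ⟨N, hN⟩ := exists_mem_span_map_eq_monomial hx₀
  let B : Finset (σ →₀ ℕ) := Finset.univ.finsuppAntidiag N
  choose P hPmem hP using fun s : B => hN s (by
    rw [Finsupp.degree_eq_sum, (Finset.mem_finsuppAntidiag.1 s.2).1])
  let A : Matrix B B (MvPolynomial τ k) := Matrix.of fun s t => coeff t (P s)
  have heval_det : ∀ x, eval x A.det = (Matrix.of fun s t : B =>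
      coeff t (map (eval x) (P s))).det := fun x => by
    rw [RingHom.map_det]
    exact congrArg Matrix.det (Matrix.ext fun s t => (coeff_map (eval x) (P s) t).symm)
  refine ⟨A.det, ?_, fun x w hw hwx => ?_⟩
  · have hone : (Matrix.of fun s t : B => coeff t (map (eval x₀) (P s))) = 1 := by
      ext s t
      rw [Matrix.of_apply, hP, coeff_monomial, Matrix.one_apply]
      exact if_congr Subtype.ext_iff.symm rfl rfl
    rw [heval_det, hone, Matrix.det_one]
    exact one_ne_zero
  · rw [heval_det, ← Matrix.exists_mulVec_eq_zero_iff]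
    refine ⟨fun t => ∏ i, w i ^ (t : σ →₀ ℕ) i, ?_, ?_⟩
    · obtain ⟨i, hi⟩ := Function.ne_iff.1 hw
      have hmem : Finsupp.single i N ∈ B := by
        simp [B, Finset.mem_finsuppAntidiag, Finsupp.single_apply]
      refine Function.ne_iff.2 ⟨⟨_, hmem⟩, ?_⟩
      change ∏ j, w j ^ Finsupp.single i N j ≠ 0
      rw [← Finsupp.prod_pow, Finsupp.prod_single_index (h := fun j e => w j ^ e) (pow_zero _)]
      exact pow_ne_zero N hi
    · ext s
      have h := eval_homogeneousComponent_eq_zero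
        (eval_map_smul_eq_zero_of_mem_span hf hwx (hPmem s)) N
      rw [eval_homogeneousComponent_eq_sum, ← Finset.sum_coe_sort] at h
      simpa [Matrix.mulVec, dotProduct] using h

end Elimination

section Derivatives

variable {k σ : Type*} [Field k]

lemma natCast_eq_zero_of_mem_support {F : MvPolynomial σ k} (hF : ∀ i, pderiv i F = 0)
    {m : σ →₀ ℕ} (hm : m ∈ F.support) (i : σ) : (m i : k) = 0 := by
  obtain hi | hi := Nat.eq_zero_or_pos (m i)
  · rw [hi, Nat.cast_zero]
  have hle : Finsupp.single i 1 ≤ m := Finsupp.single_le_iff.2 hi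
  have hcoeff := coeff_pderiv (i := i) F (m - Finsupp.single i 1)
  rw [hF, coeff_zero, tsub_add_cancel_of_le hle] at hcoeff
  have := (mul_eq_zero.1 hcoeff.symm).resolve_left (mem_support_iff.1 hm)
  simpa [Nat.cast_sub (Nat.one_le_of_lt hi)] using this

lemma exists_pow_eq_of_dvd_exponents (p : ℕ) [Fact p.Prime] [CharP k p] [PerfectRing k p]
    {F : MvPolynomial σ k} (hF : ∀ m ∈ F.support, ∀ i, p ∣ m i) : ∃ G, G ^ p = F := by
  have hroot : ∀ m ∈ F.support, ∃ G : MvPolynomial σ k, G ^ p = monomial m (coeff m F) := by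
    intro m hm
    obtain ⟨c, hc⟩ := surjective_frobenius k p (coeff m F)
    have hexp : p • m.mapRange (· / p) (Nat.zero_div p) = m :=
      Finsupp.ext fun i => Nat.mul_div_cancel' (hF m hm i)
    exact ⟨monomial _ c, by rw [monomial_pow, hexp, ← frobenius_def, hc]⟩
  choose! G hG using hroot
  refine ⟨∑ m ∈ F.support, G m, ?_⟩
  rw [sum_pow_char, Finset.sum_congr rfl hG, support_sum_monomial_coeff]

lemma exists_pderiv_ne_zero_of_irreducible [PerfectField k] {F : MvPolynomial σ k}
    (hF : Irreducible F) : ∃ i, pderiv i F ≠ 0 := by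
  by_contra! hpderiv
  have hsupport := fun m hm => natCast_eq_zero_of_mem_support hpderiv (m := m) hm
  obtain ⟨p, hp⟩ := CharP.exists k
  obtain hp_prime | rfl := CharP.char_is_prime_or_zero k p
  · have := Fact.mk hp_prime
    have := ExpChar.prime (R := k) hp_prime
    obtain ⟨G, rfl⟩ := exists_pow_eq_of_dvd_exponents p fun m hm i =>
      (CharP.cast_eq_zero_iff k p _).1 (hsupport m hm i)
    exact not_irreducible_pow hp_prime.ne_one hF
  · have := CharP.charP_to_charZero k
    have hconst : F = C (coeff 0 F) := by
      refine totalDegree_eq_zero_iff_eq_C.1 ((totalDegree_eq_zero_iff _ _).2 fun m hm i => ?_)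
      exact_mod_cast hsupport m hm i
    have hunit : IsUnit (C (σ := σ) (coeff 0 F)) := (isUnit_iff_ne_zero.2 fun h => hF.ne_zero (by
      rw [hconst, h, C_0])).map C
    exact hF.not_isUnit (hconst ▸ hunit)

/-- The differential of the polynomial function `F` at the point `x` of `k ^ σ`. -/
noncomputable def differentialAt [Fintype σ] (F : MvPolynomial σ k) (x : σ → k) :
    Module.Dual k (σ → k) :=
  ∑ i, eval x (pderiv i F) • LinearMap.proj i

lemma differentialAt_apply [Fintype σ] (F : MvPolynomial σ k) (x v : σ → k) :
    differentialAt F x v = ∑ i, eval x (pderiv i F) * v i := by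
  simp [differentialAt]

lemma differentialAt_ne_zero_iff [Fintype σ] {F : MvPolynomial σ k} {x : σ → k} :
    differentialAt F x ≠ 0 ↔ ∃ i, eval x (pderiv i F) ≠ 0 := by
  classical
  rw [← not_iff_not]
  push Not
  refine ⟨fun h i => ?_, fun h => LinearMap.ext fun v => ?_⟩
  · simpa [differentialAt_apply, Pi.single_apply] using LinearMap.congr_fun h (Pi.single i 1)
  · simp [differentialAt_apply, h]

lemma derivation_aeval [Fintype σ] {A M : Type*} [CommRing A] [Algebra k A] [AddCommGroup M]
    [Module A M] [Module k M] [IsScalarTower k A M] (D : Derivation k A M) (g : σ → A)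
    (F : MvPolynomial σ k) : D (aeval g F) = ∑ i, aeval g (pderiv i F) • D (g i) := by
  classical
  induction F using MvPolynomial.induction_on with
  | C a => simp
  | add p q hp hq => simp only [map_add, hp, hq, add_smul, Finset.sum_add_distrib]
  | mul_X p j hp =>
    simp [Derivation.leibniz, hp, add_smul, Finset.sum_add_distrib, Finset.smul_sum, mul_smul,
      pderiv_X, Pi.single_apply, apply_ite (aeval g), ite_smul]

lemma differentialAt_eq_zero_of_vanish_on [Infinite k] [Fintype σ] {F : MvPolynomial σ k}
    {L : Submodule k (σ → k)} (hL : ∀ y ∈ L, eval y F = 0) {x v : σ → k} (hx : x ∈ L)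
    (hv : v ∈ L) : differentialAt F x v = 0 := by
  let g : σ → Polynomial k := fun i => Polynomial.C (x i) + Polynomial.C (v i) * Polynomial.X
  have heval : ∀ (G : MvPolynomial σ k) t, (aeval g G).eval t = eval (x + t • v) G := fun G t => by
    have h := comp_aeval_apply g (Polynomial.aeval t) G
    rw [Polynomial.coe_aeval_eq_eval, aeval_eq_eval] at h
    rw [h]
    congr 2
    ext i
    simp only [g, Polynomial.eval_add, Polynomial.eval_mul, Polynomial.eval_C, Polynomial.eval_X,
      Pi.add_apply, Pi.smul_apply, smul_eq_mul, mul_comm]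
  have hzero : aeval g F = 0 := Polynomial.funext fun t => by
    rw [heval, hL _ (L.add_mem hx (L.smul_mem t hv)), Polynomial.eval_zero]
  have hderiv := congrArg (Polynomial.eval 0) (derivation_aeval Polynomial.derivative' g F)
  rw [hzero, map_zero, Polynomial.eval_zero, Polynomial.eval_finsetSum] at hderiv
  simp only [smul_eq_mul, Polynomial.eval_mul, heval, zero_smul, add_zero] at hderiv
  rw [differentialAt_apply, hderiv]
  simp [g]

open scoped Pointwise in
lemma eval_add_of_isHomogeneous_two [Fintype σ] {F : MvPolynomial σ k} (hF : F.IsHomogeneous 2)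
    (x y : σ → k) : eval (x + y) F = eval x F + eval y F + differentialAt F x y := by
  classical
  have hspan : F ∈ Submodule.span k (Set.range (X (R := k) (σ := σ)) * Set.range X) := by
    rwa [← Submodule.span_mul_span, ← homogeneousSubmodule_one_eq_span_X, ← pow_two,
      homogeneousSubmodule_one_pow]
  rw [differentialAt_apply]
  clear hF
  induction hspan using Submodule.span_induction with
  | mem _ h =>
    obtain ⟨_, ⟨i, rfl⟩, _, ⟨j, rfl⟩, rfl⟩ := h
    simp only [map_mul, eval_X, Pi.add_apply, add_mul, Derivation.leibniz, pderiv_X,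
      Pi.single_apply, smul_eq_mul, mul_ite, mul_one, mul_zero, map_add, apply_ite (eval x),
      map_zero, ite_mul, zero_mul, Finset.sum_add_distrib, Finset.sum_ite_eq, Finset.mem_univ,
      ↓reduceIte]
    ring
  | zero => simp
  | add p q _ _ hp hq => simp only [map_add, hp, hq, add_mul, Finset.sum_add_distrib]; ring
  | smul c p _ hp => simp only [Derivation.map_smul, smul_eval, hp, mul_add, Finset.mul_sum,
      mul_assoc]

lemma eval_add_smul_eq_zero_of_isHomogeneous_two [Finite σ]
    {F : MvPolynomial σ k} (hF : F.IsHomogeneous 2) {p : σ → k} (hpF : eval p F = 0)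
    (hp : ∀ i, eval p (pderiv i F) = 0) {x : σ → k} (hx : eval x F = 0) (t : k) :
    eval (x + t • p) F = 0 := by
  have := Fintype.ofFinite σ
  have hpderiv : ∀ i, eval (t • p) (pderiv i F) = 0 := fun i => by
    rw [eval_smul_of_isHomogeneous hF.pderiv, hp, mul_zero]
  rw [add_comm, eval_add_of_isHomogeneous_two hF, eval_smul_of_isHomogeneous hF, hpF, hx,
    differentialAt_apply]
  simp [hpderiv]

end Derivatives

section Forms

variable {k σ τ : Type*} [Field k]

lemma finrank_homogeneousSubmodule [Fintype σ] (n : ℕ) :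
    Module.finrank k (homogeneousSubmodule σ k n) = (Fintype.card σ).multichoose n := by
  classical
  have hmem : ∀ s : σ →₀ ℕ,
      s ∈ Finset.univ.finsuppAntidiag n ↔ s ∈ {s : σ →₀ ℕ | s.degree = n} := fun s => by
    simp [Finset.mem_finsuppAntidiag, Finsupp.degree_eq_sum]
  have := Fintype.ofFinset _ hmem
  rw [homogeneousSubmodule_eq_finsupp_supported,
    (AddMonoidAlgebra.supportedEquivFinsupp _).finrank_eq, Module.finrank_finsupp_self,
    Fintype.card_of_finset' _ hmem, Finset.card_finsuppAntidiag_nat_eq_multichoose,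
    Finset.card_univ]

lemma exists_ne_zero_vanish_on_submodules [Fintype σ] {ι : Type*} [Fintype ι] {n : ℕ}
    (W : ι → Submodule k (σ → k))
    (hW : ∑ i, (Module.finrank k (W i)).multichoose n < (Fintype.card σ).multichoose n) :
    ∃ Q : MvPolynomial σ k, Q ≠ 0 ∧ Q.IsHomogeneous n ∧ ∀ i, ∀ y ∈ W i, eval y Q = 0 := by
  choose f _ hf using fun i => exists_injective_range_eq (W i)
  let restriction : homogeneousSubmodule σ k n →ₗ[k]
      Π i, homogeneousSubmodule (Fin (Module.finrank k (W i))) k n :=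
    LinearMap.pi fun i => (linearPullback (f i)).toLinearMap.restrict fun _ hp =>
      isHomogeneous_linearPullback (f i) hp
  have hfinite := Module.Finite.of_fg (homogeneousSubmodule_fg σ k n)
  have hfinite' := fun i => Module.Finite.of_fg
    (homogeneousSubmodule_fg (Fin (Module.finrank k (W i))) k n)
  have hker : LinearMap.ker restriction ≠ ⊥ := by
    apply LinearMap.ker_ne_bot_of_finrank_lt
    rw [Module.finrank_pi_fintype]
    simpa only [finrank_homogeneousSubmodule, Fintype.card_fin] using hW
  obtain ⟨⟨Q, hQ⟩, hQker, hQ_ne⟩ := Submodule.exists_mem_ne_zero_of_ne_bot hker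
  refine ⟨Q, fun h => hQ_ne (Subtype.ext h), hQ, fun i y hy => ?_⟩
  obtain ⟨v, rfl⟩ := LinearMap.mem_range.1 (hf i ▸ hy)
  have hzero : linearPullback (f i) Q = 0 :=
    congrArg Subtype.val (congrFun (LinearMap.mem_ker.1 hQker) i)
  rw [← eval_linearPullback, hzero, map_zero]

lemma exists_mem_eval_ne_zero_forall_notMem [Infinite k] [Finite σ] {G : MvPolynomial σ k}
    {L : Submodule k (σ → k)} (hG : ∃ x ∈ L, eval x G ≠ 0) {T : Set (Submodule k (σ → k))}
    (hT : T.Finite) (hLT : ∀ M ∈ T, ¬ L ≤ M) :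
    ∃ y ∈ L, eval y G ≠ 0 ∧ ∀ M ∈ T, y ∉ M := by
  have := Fintype.ofFinite σ
  have hprime := isPrime_vanishingIdeal_submodule L
  have exists_dual : ∀ M ∈ T, ∃ ℓ : Module.Dual k (σ → k), M ≤ LinearMap.ker ℓ ∧
      linearForm ℓ ∉ vanishingIdeal k (L : Set (σ → k)) := fun M hM => by
    obtain ⟨x, hxL, hxM⟩ := SetLike.not_le_iff_exists.1 (hLT M hM)
    obtain ⟨ℓ, hℓx, hℓM⟩ := M.exists_le_ker_of_notMem hxM
    refine ⟨ℓ, hℓM, fun h => hℓx ?_⟩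
    simpa [aeval_eq_eval, eval_linearForm] using mem_vanishingIdeal_iff.1 h x hxL
  choose! ℓ hℓM hℓL using exists_dual
  have hprod : G * ∏ M ∈ hT.toFinset, linearForm (ℓ M) ∉ vanishingIdeal k (L : Set (σ → k)) := by
    rw [hprime.mul_mem_iff_mem_or_mem, hprime.prod_mem_iff]
    rintro (h | ⟨M, hM, h⟩)
    · obtain ⟨x, hxL, hx⟩ := hG
      exact hx (by simpa [aeval_eq_eval] using mem_vanishingIdeal_iff.1 h x hxL)
    · exact hℓL M (hT.mem_toFinset.1 hM) h
  simp only [mem_vanishingIdeal_iff, not_forall] at hprod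
  obtain ⟨y, hyL, hy⟩ := hprod
  rw [aeval_eq_eval, map_mul, map_prod, mul_eq_zero, not_or, Finset.prod_eq_zero_iff] at hy
  refine ⟨y, hyL, hy.1, fun M hM hyM => hy.2 ⟨M, hT.mem_toFinset.2 hM, ?_⟩⟩
  rw [eval_linearForm]
  exact hℓM M hM hyM

lemma exists_eval_eq_eval_add (F : MvPolynomial σ k) (v : σ → k) :
    ∃ H : MvPolynomial σ k, ∀ x, eval x H = eval (x + v) F := by
  refine ⟨aeval (fun i => X i + C (v i)) F, fun x => ?_⟩
  have h := comp_aeval_apply (fun i => X i + C (v i)) (aeval x) F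
  have hg : (fun i => aeval x (X i + C (v i))) = x + v := funext fun i => by simp
  rwa [hg, aeval_eq_eval, aeval_eq_eval] at h

lemma exists_eval_map_eval_eq_eval_add [Finite τ] (F : MvPolynomial σ k)
    (f : (τ → k) →ₗ[k] (σ → k)) : ∃ P : MvPolynomial τ (MvPolynomial σ k),
      ∀ x w, eval w (map (eval x) P) = eval (x + f w) F := by
  have := Fintype.ofFinite τ
  let g : σ → MvPolynomial τ (MvPolynomial σ k) := fun i =>
    C (X i) + map C (linearForm (LinearMap.proj i ∘ₗ f))
  refine ⟨aeval g F, fun x w => ?_⟩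
  induction F using MvPolynomial.induction_on with
  | C a => simp [MvPolynomial.algebraMap_apply]
  | add p q hp hq => simp only [map_add, hp, hq]
  | mul_X p i hp =>
    have hC : (eval x).comp C = RingHom.id k := RingHom.ext fun a => eval_C a
    rw [map_mul, aeval_X, map_mul, map_mul, hp, map_mul, eval_X]
    simp [g, map_map, hC, eval_linearForm]

lemma map_homogeneousComponent {R S : Type*} [CommSemiring R] [CommSemiring S] (φ : R →+* S)
    (n : ℕ) (p : MvPolynomial σ R) :
    map φ (homogeneousComponent n p) = homogeneousComponent n (map φ p) := by
  ext m
  simp only [coeff_map, coeff_homogeneousComponent, apply_ite φ, map_zero]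

end Forms

section SmoothPoints

variable {k σ : Type*} [Field k] {F : MvPolynomial σ k} {d : ℕ} {x : σ → k}

/-- `x` lies on the affine cone `F = 0` and is not a singular point of it. -/
structure IsSmoothPoint (F : MvPolynomial σ k) (x : σ → k) : Prop where
  eval_eq_zero : eval x F = 0
  exists_pderiv_ne_zero : ∃ i, eval x (pderiv i F) ≠ 0

lemma IsSmoothPoint.of_smul {c : k} (hhom : F.IsHomogeneous d) (hx : IsSmoothPoint F (c • x)) :
    ∃ i, eval x (pderiv i F) ≠ 0 := by
  obtain ⟨i, hi⟩ := hx.exists_pderiv_ne_zero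
  rw [eval_smul_of_isHomogeneous hhom.pderiv] at hi
  exact ⟨i, right_ne_zero_of_mul hi⟩

lemma IsSmoothPoint.ne_zero (hhom : F.IsHomogeneous d) (hd : 2 ≤ d) (hx : IsSmoothPoint F x) :
    x ≠ 0 := by
  rintro rfl
  obtain ⟨i, hi⟩ := hx.exists_pderiv_ne_zero
  rw [← zero_smul k (0 : σ → k), eval_smul_of_isHomogeneous hhom.pderiv,
    zero_pow (by omega), zero_mul] at hi
  exact hi rfl

lemma exists_isSmoothPoint [IsAlgClosed k] [Finite σ] (hF : Irreducible F)
    (hhom : F.IsHomogeneous d) (hd : d ≠ 0) : ∃ x, IsSmoothPoint F x := by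
  obtain ⟨i, hi⟩ := exists_pderiv_ne_zero_of_irreducible hF
  by_contra! h
  have hdvd : F ∣ pderiv i F := dvd_of_forall_eval_eq_zero hF fun x hx => by
    by_contra hxi
    exact h x ⟨hx, i, hxi⟩
  have hle := totalDegree_le_of_dvd_of_isDomain hdvd hi
  rw [hhom.totalDegree hF.ne_zero, hhom.pderiv.totalDegree hi] at hle
  omega

end SmoothPoints

section Lines

variable {k σ : Type*} [Field k] {F : MvPolynomial σ k} {d : ℕ}

/-- The projective line given by the plane `L` of `k ^ σ` lies on the hypersurface `F = 0`. Two
lines `L` and `M` meet if and only if `¬ Disjoint L M`. -/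
structure IsLineOn (F : MvPolynomial σ k) (L : Submodule k (σ → k)) : Prop where
  finrank_eq : Module.finrank k L = 2
  eval_eq_zero : ∀ y ∈ L, eval y F = 0

lemma not_disjoint_iff_exists_mem_ne_zero {V : Type*} [AddCommGroup V] [Module k V]
    {L M : Submodule k V} : ¬ Disjoint L M ↔ ∃ y ∈ L, y ∈ M ∧ y ≠ 0 := by
  rw [Submodule.disjoint_def]
  push Not
  rfl

lemma exists_smul_eq_of_mem_inf {V : Type*} [AddCommGroup V] [Module k V]
    [FiniteDimensional k V] {L M : Submodule k V} (hL : Module.finrank k L = 2)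
    (hM : Module.finrank k M = 2) (hLM : L ≠ M) {x y : V} (hx : x ∈ L ⊓ M) (hx_ne : x ≠ 0)
    (hy : y ∈ L ⊓ M) : ∃ c : k, c • x = y := by
  have hlt : L ⊓ M < L := inf_lt_left.2 fun hle =>
    hLM (Submodule.eq_of_le_of_finrank_eq hle (hL.trans hM.symm))
  have hspan : Submodule.span k {x} = L ⊓ M := by
    refine Submodule.eq_of_le_of_finrank_le ((Submodule.span_singleton_le_iff_mem _ _).2 hx) ?_
    have := Submodule.finrank_lt_finrank_of_lt hlt
    rw [finrank_span_singleton hx_ne]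
    omega
  exact Submodule.mem_span_singleton.1 (hspan ▸ hy)

lemma isLineOn_span_sup_span [Finite σ] (hhom : F.IsHomogeneous d) {x y : σ → k} (hy_ne : y ≠ 0)
    (hxy : x ∉ Submodule.span k {y}) (hy : eval y F = 0) (hF : ∀ t : k, eval (x + t • y) F = 0) :
    IsLineOn F (Submodule.span k {y} ⊔ Submodule.span k {x}) where
  finrank_eq := by rw [Submodule.finrank_sup_span_singleton hxy, finrank_span_singleton hy_ne]
  eval_eq_zero z hz := by
    obtain ⟨_, hb, _, ha, rfl⟩ := Submodule.mem_sup.1 hz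
    obtain ⟨b, rfl⟩ := Submodule.mem_span_singleton.1 hb
    obtain ⟨a, rfl⟩ := Submodule.mem_span_singleton.1 ha
    obtain rfl | ha_ne := eq_or_ne a 0
    · rw [zero_smul, add_zero, eval_smul_of_isHomogeneous hhom, hy, mul_zero]
    · have hsmul : b • y + a • x = a • (x + (b / a) • y) := by
        rw [smul_add, smul_smul, mul_div_cancel₀ _ ha_ne, add_comm]
      rw [hsmul, eval_smul_of_isHomogeneous hhom, hF, mul_zero]

lemma exists_eval_ne_zero_of_no_vanishing_line [IsAlgClosed k] [Finite σ] {L : Submodule k (σ → k)}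
    {x₀ : σ → k} (hx₀ : ∀ y ∈ L, y ≠ 0 → ∃ t : k, eval (x₀ + t • y) F ≠ 0) :
    ∃ G : MvPolynomial σ k, eval x₀ G ≠ 0 ∧
      ∀ x, ∀ y ∈ L, y ≠ 0 → (∀ t : k, eval (x + t • y) F = 0) → eval x G = 0 := by
  obtain ⟨f, hf_inj, hf⟩ := exists_injective_range_eq L
  obtain ⟨P, hP⟩ := exists_eval_map_eval_eq_eval_add F f
  have hmem : ∀ w, f w ∈ L := fun w => hf.le (LinearMap.mem_range_self f w)
  have hcomponents : ∀ x w, (∀ j, eval w (map (eval x) (homogeneousComponent j P)) = 0) ↔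
      ∀ t : k, eval (x + t • f w) F = 0 := by
    simp only [map_homogeneousComponent, ← map_smul f, ← hP]
    refine fun x w => ⟨fun h t => ?_, fun h j => eval_homogeneousComponent_eq_zero h j⟩
    rw [← sum_homogeneousComponent (map (eval x) P), map_sum]
    refine Finset.sum_eq_zero fun j _ => ?_
    rw [eval_smul_of_isHomogeneous (homogeneousComponent_isHomogeneous _ _), h j, mul_zero]
  obtain ⟨G, hGx₀, hG⟩ := exists_eval_ne_zero_of_no_common_zero
    (fun j => homogeneousComponent_isHomogeneous j P) (x₀ := x₀) fun w hw => by
      by_contra hw_ne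
      obtain ⟨t, ht⟩ := hx₀ (f w) (hmem w) ((map_ne_zero_iff f hf_inj).2 hw_ne)
      exact ht ((hcomponents x₀ w).1 hw t)
  refine ⟨G, hGx₀, fun x y hyL hy_ne hy => ?_⟩
  obtain ⟨w, rfl⟩ := LinearMap.mem_range.1 (hf ▸ hyL)
  exact hG x w ((map_ne_zero_iff f hf_inj).1 hy_ne) ((hcomponents x w).2 hy)

lemma dvd_of_infinite_setOf_isLineOn [Infinite k] {F G : MvPolynomial (Fin 4) k}
    (hF : Irreducible F) {S : Set (Submodule k (Fin 4 → k))} (hS : S.Infinite)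
    (hSF : ∀ L ∈ S, IsLineOn F L) (hSG : ∀ L ∈ S, ∀ y ∈ L, eval y G = 0) : F ∣ G := by
  by_contra hFG
  refine hS ((finite_setOf_vanish_of_not_dvd hF hFG).subset fun L hL => ⟨?_, ?_, hSG L hL⟩)
  · rw [(hSF L hL).finrank_eq, Nat.card_fin]
  · exact (hSF L hL).eval_eq_zero

lemma eval_eq_zero_of_lt_card_of_not_disjoint [IsAlgClosed k] [Finite σ] {n : ℕ}
    {Q : MvPolynomial σ k} (hQ : Q.IsHomogeneous n) {A : Finset (Submodule k (σ → k))}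
    (hA : n < A.card) (hAQ : ∀ L ∈ A, ∀ y ∈ L, eval y Q = 0) {M : Submodule k (σ → k)}
    (hM : Module.finrank k M = 2) (hAM : ∀ L ∈ A, ¬ Disjoint L M)
    (hdisj : ∀ L ∈ A, ∀ L' ∈ A, L ≠ L' → Disjoint (L ⊓ L') M) : ∀ y ∈ M, eval y Q = 0 := by
  classical
  by_contra! hMQ
  simp only [not_disjoint_iff_exists_mem_ne_zero] at hAM
  choose! p hpL hpM hp_ne using hAM
  have hinj : Set.InjOn (fun L => Submodule.span k {p L}) A := fun L hL L' hL' h => by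
    by_contra hne
    have hp : p L ∈ L' := (Submodule.span_singleton_le_iff_mem _ _).2 (hpL L' hL')
      (h.le (Submodule.mem_span_singleton_self (p L)))
    exact hp_ne L hL (Submodule.disjoint_def.1 (hdisj L hL L' hL' hne) _ ⟨hpL L hL, hp⟩ (hpM L hL))
  refine hA.not_ge (Finset.card_image_of_injOn hinj ▸ card_le_of_vanish_on_codim_one hQ hMQ ?_)
  rintro _ hH
  obtain ⟨L, hL, rfl⟩ := Finset.mem_image.1 hH
  refine ⟨(Submodule.span_singleton_le_iff_mem _ _).2 (hpM L hL), ?_, fun y hy => ?_⟩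
  · rw [finrank_span_singleton (hp_ne L hL), hM]
  · exact hAQ L hL y ((Submodule.span_singleton_le_iff_mem _ _).2 (hpL L hL) hy)

/-- Every smooth point of the hypersurface `F = 0` lies on two distinct lines of it. Nothing is
required of the singular points. -/
def IsDoublyRuled (F : MvPolynomial σ k) : Prop :=
  ∀ x, IsSmoothPoint F x → ∃ L₁ L₂, L₁ ≠ L₂ ∧ IsLineOn F L₁ ∧ IsLineOn F L₂ ∧ x ∈ L₁ ∧ x ∈ L₂

lemma IsDoublyRuled.exists_isLineOn_ne (hruled : IsDoublyRuled F) {x : σ → k}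
    (hx : IsSmoothPoint F x) (L : Submodule k (σ → k)) :
    ∃ M, M ≠ L ∧ IsLineOn F M ∧ x ∈ M := by
  obtain ⟨L₁, L₂, hne, h₁, h₂, hx₁, hx₂⟩ := hruled x hx
  obtain rfl | hL₁ := eq_or_ne L₁ L
  · exact ⟨L₂, hne.symm, h₂, hx₂⟩
  · exact ⟨L₁, hL₁, h₁, hx₁⟩

lemma infinite_of_forall_isSmoothPoint [Infinite k] [Finite σ] {L : Submodule k (σ → k)}
    (hL : IsLineOn F L) (hsmooth : ∃ x ∈ L, IsSmoothPoint F x) {T : Set (Submodule k (σ → k))}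
    (hT : ∀ y ∈ L, IsSmoothPoint F y → ∃ M ∈ T, M ≠ L ∧ IsLineOn F M ∧ y ∈ M) : T.Infinite := by
  intro hfinite
  obtain ⟨x, hxL, hx⟩ := hsmooth
  obtain ⟨i, hi⟩ := hx.exists_pderiv_ne_zero
  obtain ⟨y, hyL, hyi, hyT⟩ := exists_mem_eval_ne_zero_forall_notMem ⟨x, hxL, hi⟩
    (hfinite.subset (Set.sep_subset T fun M => ¬ L ≤ M)) fun M hM => hM.2
  obtain ⟨M, hMT, hML, hM, hyM⟩ := hT y hyL ⟨hL.eval_eq_zero y hyL, i, hyi⟩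
  refine hyT M ⟨hMT, fun hle => hML ?_⟩ hyM
  exact (Submodule.eq_of_le_of_finrank_eq hle (hL.finrank_eq.trans hM.finrank_eq.symm)).symm

end Lines

section DoublyRuledSurfaces

variable {k : Type*} [Field k] [IsAlgClosed k] {F : MvPolynomial (Fin 4) k} {d : ℕ}

lemma card_le_of_mem_of_isSmoothPoint (hF : Irreducible F) (hhom : F.IsHomogeneous d)
    (hd : 2 ≤ d) {x : Fin 4 → k} (hx : IsSmoothPoint F x) {S : Finset (Submodule k (Fin 4 → k))}
    (hS : ∀ L ∈ S, IsLineOn F L ∧ x ∈ L) : S.card ≤ d := by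
  have hker := Module.Dual.finrank_ker_add_one_of_ne_zero
    (differentialAt_ne_zero_iff.2 hx.exists_pderiv_ne_zero)
  have hdeg : F.totalDegree ≠ 1 := by rw [hhom.totalDegree hF.ne_zero]; omega
  refine card_le_of_vanish_on_codim_one hhom
    (exists_mem_eval_ne_zero_of_finrank_add_one_eq hF hdeg hker) fun L hL => ?_
  obtain ⟨hLF, hxL⟩ := hS L hL
  refine ⟨fun v hv => differentialAt_eq_zero_of_vanish_on hLF.eval_eq_zero hxL hv, ?_,
    hLF.eval_eq_zero⟩
  rw [Module.finrank_fin_fun] at hker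
  rw [hLF.finrank_eq]
  omega

lemma exists_isLineOn_mem_of_infinite (hF : Irreducible F) (hhom : F.IsHomogeneous d)
    {L : Submodule k (Fin 4 → k)} (hL : IsLineOn F L)
    (hinf : {M | IsLineOn F M ∧ ¬ Disjoint L M}.Infinite) {x : Fin 4 → k}
    (hx : eval x F = 0) : ∃ M, IsLineOn F M ∧ x ∈ M ∧ ¬ Disjoint L M := by
  suffices ∃ y ∈ L, y ≠ 0 ∧ ∀ t : k, eval (x + t • y) F = 0 by
    obtain ⟨y, hyL, hy_ne, hxy⟩ := this
    have hyL' : Submodule.span k {y} ≤ L := (Submodule.span_singleton_le_iff_mem _ _).2 hyL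
    by_cases hxL : x ∈ L
    · exact ⟨L, hL, hxL, not_disjoint_iff_exists_mem_ne_zero.2 ⟨y, hyL, hyL, hy_ne⟩⟩
    · refine ⟨_, isLineOn_span_sup_span hhom hy_ne (fun h => hxL (hyL' h)) (hL.eval_eq_zero y hyL)
        hxy, Submodule.mem_sup_right (Submodule.mem_span_singleton_self x),
        not_disjoint_iff_exists_mem_ne_zero.2 ⟨y, hyL, ?_, hy_ne⟩⟩
      exact Submodule.mem_sup_left (Submodule.mem_span_singleton_self y)
  by_contra! hcon
  obtain ⟨G, hGx, hG⟩ := exists_eval_ne_zero_of_no_vanishing_line hcon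
  have hdvd : F ∣ G := dvd_of_infinite_setOf_isLineOn hF hinf (fun M hM => hM.1)
    fun M ⟨hM, hLM⟩ z hz => by
      obtain ⟨y, hyL, hyM, hy_ne⟩ := not_disjoint_iff_exists_mem_ne_zero.1 hLM
      exact hG z y hyL hy_ne fun t => hM.eval_eq_zero _ (M.add_mem hz (M.smul_mem t hyM))
  exact hGx (zero_dvd_iff.1 (hx ▸ map_dvd (eval x) hdvd))

lemma infinite_setOf_isLineOn (hF : Irreducible F) (hhom : F.IsHomogeneous d) (hd : d ≠ 0)
    (hruled : IsDoublyRuled F) : {L | IsLineOn F L ∧ ∃ x ∈ L, IsSmoothPoint F x}.Infinite := by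
  obtain ⟨x, hx⟩ := exists_isSmoothPoint hF hhom hd
  obtain ⟨L, -, hL, hxL⟩ := hruled.exists_isLineOn_ne hx ⊥
  refine infinite_of_forall_isSmoothPoint hL ⟨x, hxL, hx⟩ fun y _ hy => ?_
  obtain ⟨M, hML, hM, hyM⟩ := hruled.exists_isLineOn_ne hy L
  exact ⟨M, ⟨hM, y, hyM, hy⟩, hML, hM, hyM⟩

lemma exists_isLineOn_mem_not_disjoint (hF : Irreducible F) (hhom : F.IsHomogeneous d)
    (hd : 2 ≤ d) (hruled : IsDoublyRuled F) {L : Submodule k (Fin 4 → k)} (hL : IsLineOn F L)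
    (hsmooth : ∃ x ∈ L, IsSmoothPoint F x) {z : Fin 4 → k} (hz : eval z F = 0) :
    ∃ M, IsLineOn F M ∧ z ∈ M ∧ ¬ Disjoint L M := by
  refine exists_isLineOn_mem_of_infinite hF hhom hL
    (infinite_of_forall_isSmoothPoint hL hsmooth fun y hyL hy => ?_) hz
  obtain ⟨M, hML, hM, hyM⟩ := hruled.exists_isLineOn_ne hy L
  exact ⟨M, ⟨hM, not_disjoint_iff_exists_mem_ne_zero.2 ⟨y, hyL, hyM, hy.ne_zero hhom hd⟩⟩,
    hML, hM, hyM⟩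

/-- If `Z` were a cone with singular vertex `p`, every line of `Z` would pass through `p`, since `Z`
contains no plane, and so no smooth point would lie on two lines. -/
lemma exists_eval_add_smul_ne_zero_of_singular (hF : Irreducible F) (hhom : F.IsHomogeneous d)
    (hd : 2 ≤ d) (hruled : IsDoublyRuled F) {p : Fin 4 → k} (hp_ne : p ≠ 0)
    (hp : ∀ i, eval p (pderiv i F) = 0) :
    ∃ x, eval x F = 0 ∧ ∃ t : k, eval (x + t • p) F ≠ 0 := by
  by_contra! hcone
  obtain ⟨x, hx⟩ := exists_isSmoothPoint hF hhom (by omega)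
  obtain ⟨L₁, L₂, hne, h₁, h₂, hx₁, hx₂⟩ := hruled x hx
  have mem_of_isLineOn : ∀ L, IsLineOn F L → p ∈ L := fun L hL => by
    by_contra hpL
    have hplane : Module.finrank k ↥(L ⊔ Submodule.span k {p}) + 1 =
        Module.finrank k (Fin 4 → k) := by
      rw [Submodule.finrank_sup_span_singleton hpL, hL.finrank_eq, Module.finrank_fin_fun]
    have hdeg : F.totalDegree ≠ 1 := by rw [hhom.totalDegree hF.ne_zero]; omega
    obtain ⟨y, hy, hyF⟩ := exists_mem_eval_ne_zero_of_finrank_add_one_eq hF hdeg hplane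
    obtain ⟨z, hz, w, hw, rfl⟩ := Submodule.mem_sup.1 hy
    obtain ⟨t, rfl⟩ := Submodule.mem_span_singleton.1 hw
    exact hyF (hcone z (hL.eval_eq_zero z hz) t)
  obtain ⟨c, rfl⟩ := exists_smul_eq_of_mem_inf h₁.finrank_eq h₂.finrank_eq hne
    ⟨mem_of_isLineOn L₁ h₁, mem_of_isLineOn L₂ h₂⟩ hp_ne ⟨hx₁, hx₂⟩
  obtain ⟨i, hi⟩ := hx.of_smul hhom
  exact hi (hp i)

lemma finite_setOf_isLineOn_mem (hF : Irreducible F) (hhom : F.IsHomogeneous d) (hd : 2 ≤ d)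
    (hruled : IsDoublyRuled F) {p : Fin 4 → k} (hp_ne : p ≠ 0) :
    {L | IsLineOn F L ∧ p ∈ L}.Finite := by
  by_contra hinf
  by_cases hp : ∀ i, eval p (pderiv i F) = 0
  · obtain ⟨x, hx, t, hxt⟩ := exists_eval_add_smul_ne_zero_of_singular hF hhom hd hruled hp_ne hp
    obtain ⟨H, hH⟩ := exists_eval_eq_eval_add F (t • p)
    have hdvd : F ∣ H := dvd_of_infinite_setOf_isLineOn hF hinf (fun L hL => hL.1)
      fun L ⟨hL, hpL⟩ y hy => by
        rw [hH]
        exact hL.eval_eq_zero _ (L.add_mem hy (L.smul_mem t hpL))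
    exact hxt (hH x ▸ zero_dvd_iff.1 (hx ▸ map_dvd (eval x) hdvd))
  · push Not at hp
    obtain ⟨L, hL⟩ := Set.Infinite.nonempty hinf
    obtain ⟨S, hS, hS_card⟩ := Set.Infinite.exists_subset_card_eq hinf (d + 1)
    have := card_le_of_mem_of_isSmoothPoint hF hhom hd ⟨hL.1.eval_eq_zero p hL.2, hp⟩
      fun M hM => hS hM
    omega

lemma finite_setOf_isLineOn_not_disjoint_inf (hF : Irreducible F) (hhom : F.IsHomogeneous d)
    (hd : 2 ≤ d) (hruled : IsDoublyRuled F) {L L' : Submodule k (Fin 4 → k)} (hL : IsLineOn F L)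
    (hL' : IsLineOn F L') (hne : L ≠ L') : {M | IsLineOn F M ∧ ¬ Disjoint (L ⊓ L') M}.Finite := by
  obtain hbot | hbot := eq_or_ne (L ⊓ L') ⊥
  · simp [hbot]
  obtain ⟨p, hp, hp_ne⟩ := Submodule.exists_mem_ne_zero_of_ne_bot hbot
  refine (finite_setOf_isLineOn_mem hF hhom hd hruled hp_ne).subset fun M ⟨hM, hLM⟩ => ⟨hM, ?_⟩
  obtain ⟨y, hy, hyM, hy_ne⟩ := not_disjoint_iff_exists_mem_ne_zero.1 hLM
  obtain ⟨c, rfl⟩ := exists_smul_eq_of_mem_inf hL.finrank_eq hL'.finrank_eq hne hy hy_ne hp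
  exact M.smul_mem c hyM

lemma finite_setOf_isLineOn_meeting_three (hF : Irreducible F) (hhom : F.IsHomogeneous d)
    (hd : 2 < d) {A : Finset (Submodule k (Fin 4 → k))} (hA_card : A.card = 3)
    (hA : ∀ L ∈ A, IsLineOn F L) :
    {M | IsLineOn F M ∧ (∀ L ∈ A, ¬ Disjoint L M) ∧
      ∀ L ∈ A, ∀ L' ∈ A, L ≠ L' → Disjoint (L ⊓ L') M}.Finite := by
  by_contra hinf
  -- Vanishing on the three lines imposes at most `9` conditions on the `10` coefficients of `Q`.
  have hconditions : ∑ L : A, (Module.finrank k L.1).multichoose 2 <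
      (Fintype.card (Fin 4)).multichoose 2 := by
    rw [Finset.sum_congr rfl fun L _ => congrArg (Nat.multichoose · 2) (hA L.1 L.2).finrank_eq,
      Finset.sum_const, Finset.card_univ, Fintype.card_coe, hA_card, Fintype.card_fin]
    simp [Nat.multichoose_eq, Nat.choose]
  obtain ⟨Q, hQ_ne, hQ, hQA⟩ := exists_ne_zero_vanish_on_submodules (fun L : A => L.1) hconditions
  have hdvd : F ∣ Q := dvd_of_infinite_setOf_isLineOn hF hinf (fun M hM => hM.1)
    fun M ⟨hM, hAM, hdisj⟩ => eval_eq_zero_of_lt_card_of_not_disjoint hQ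
      (by omega) (fun L hL => hQA ⟨L, hL⟩) hM.finrank_eq hAM hdisj
  have hle := totalDegree_le_of_dvd_of_isDomain hdvd hQ_ne
  rw [hhom.totalDegree hF.ne_zero, hQ.totalDegree hQ_ne] at hle
  omega

lemma finite_setOf_isLineOn_forall_not_disjoint (hF : Irreducible F) (hhom : F.IsHomogeneous d)
    (hd : 2 < d) (hruled : IsDoublyRuled F) {A : Finset (Submodule k (Fin 4 → k))}
    (hA_card : A.card = 3) (hA : ∀ L ∈ A, IsLineOn F L) :
    {M | IsLineOn F M ∧ ∀ L ∈ A, ¬ Disjoint L M}.Finite := by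
  classical
  have hconcurrent := A.offDiag.finite_toSet.biUnion fun LL hLL =>
    have h := Finset.mem_offDiag.1 hLL
    finite_setOf_isLineOn_not_disjoint_inf hF hhom hd.le hruled (hA _ h.1) (hA _ h.2.1) h.2.2
  refine (hconcurrent.union (finite_setOf_isLineOn_meeting_three hF hhom hd hA_card hA)).subset ?_
  rintro M ⟨hM, hAM⟩
  by_cases hdisj : ∀ L ∈ A, ∀ L' ∈ A, L ≠ L' → Disjoint (L ⊓ L') M
  · exact Or.inr ⟨hM, hAM, hdisj⟩
  · push Not at hdisj
    obtain ⟨L, hL, L', hL', hne, hmeet⟩ := hdisj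
    exact Or.inl (Set.mem_biUnion (x := (L, L')) (Finset.mem_offDiag.2 ⟨hL, hL', hne⟩) ⟨hM, hmeet⟩)

lemma exists_isLineOn_mem_meeting_three (hF : Irreducible F) (hhom : F.IsHomogeneous d)
    (hd : 2 ≤ d) (hruled : IsDoublyRuled F) {S : Finset (Submodule k (Fin 4 → k))}
    (hS : ∀ L ∈ S, IsLineOn F L ∧ ∃ x ∈ L, IsSmoothPoint F x) (hS_card : d * 2 < S.card)
    {y : Fin 4 → k} (hy : IsSmoothPoint F y) :
    ∃ P, IsLineOn F P ∧ y ∈ P ∧ ∃ A ∈ S.powersetCard 3, ∀ L ∈ A, ¬ Disjoint L P := by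
  classical
  choose! M hM hyM hLM using fun L hL => exists_isLineOn_mem_not_disjoint hF hhom hd hruled
    (hS L hL).1 (hS L hL).2 hy.eval_eq_zero
  have hM_card : (S.image M).card ≤ d :=
    card_le_of_mem_of_isSmoothPoint hF hhom hd hy fun P hP => by
      obtain ⟨L, hL, rfl⟩ := Finset.mem_image.1 hP
      exact ⟨hM L hL, hyM L hL⟩
  obtain ⟨P, hP, hP_card⟩ := Finset.exists_lt_card_fiber_of_mul_lt_card_of_maps_to
    (fun L hL => Finset.mem_image_of_mem M hL)
    ((Nat.mul_le_mul_right 2 hM_card).trans_lt hS_card)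
  obtain ⟨A, hAP, hA_card⟩ := Finset.exists_subset_card_eq hP_card
  obtain ⟨L, hL, rfl⟩ := Finset.mem_image.1 hP
  refine ⟨M L, hM L hL, hyM L hL, A, Finset.mem_powersetCard.2
    ⟨hAP.trans (Finset.filter_subset _ _), hA_card⟩, fun L' hL' => ?_⟩
  obtain ⟨hL'S, hML'⟩ := Finset.mem_filter.1 (hAP hL')
  exact hML' ▸ hLM L' hL'S

lemma IsDoublyRuled.degree_le_two (hF : Irreducible F) (hhom : F.IsHomogeneous d)
    (hruled : IsDoublyRuled F) : d ≤ 2 := by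
  by_contra! hd
  have hinf := infinite_setOf_isLineOn hF hhom (by omega) hruled
  obtain ⟨S, hS, hS_card⟩ := hinf.exists_subset_card_eq (d * 2 + 1)
  have hfinite := (S.powersetCard 3).finite_toSet.biUnion fun A hA =>
    have h := Finset.mem_powersetCard.1 hA
    finite_setOf_isLineOn_forall_not_disjoint hF hhom hd hruled h.2 fun L hL => (hS (h.1 hL)).1
  obtain ⟨N, ⟨hN, hN_smooth⟩, hN_notMem⟩ := hinf.exists_notMem_finite hfinite
  refine infinite_of_forall_isSmoothPoint hN hN_smooth (fun y _ hy => ?_) hfinite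
  obtain ⟨P, hP, hyP, A, hA, hAP⟩ := exists_isLineOn_mem_meeting_three hF hhom hd.le hruled
    (fun L hL => hS hL) (by omega) hy
  have hP_mem := Set.mem_biUnion (t := fun A : Finset (Submodule k (Fin 4 → k)) =>
    {M | IsLineOn F M ∧ ∀ L ∈ A, ¬ Disjoint L M}) hA ⟨hP, hAP⟩
  exact ⟨P, hP_mem, fun h => hN_notMem (h ▸ hP_mem), hP, hyP⟩

theorem stmt_14_general (hF : Irreducible F) (hhom : F.IsHomogeneous d) (hd : 2 ≤ d)
    (hruled : IsDoublyRuled F) :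
    d = 2 ∧ ∀ x : Fin 4 → k, x ≠ 0 → eval x F = 0 → ∃ i, eval x (pderiv i F) ≠ 0 := by
  obtain rfl := (hruled.degree_le_two hF hhom).antisymm hd
  refine ⟨rfl, fun p hp_ne hp => ?_⟩
  by_contra! hp_sing
  obtain ⟨x, hx, t, hxt⟩ := exists_eval_add_smul_ne_zero_of_singular hF hhom hd hruled hp_ne hp_sing
  exact hxt (eval_add_smul_eq_zero_of_isHomogeneous_two hhom hp hp_sing hx t)

end DoublyRuledSurfaces

/-- Lemma 7.2 of Salberger: a non-linear integral surface `Z = {F = 0} ⊂ P^3` over an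
algebraically closed field of characteristic `0`, each of whose points lies on at least
two different lines on `Z` or on a line contained in the singular locus of `Z`, is a
non-singular quadric. -/
theorem stmt_14 (k : Type*) [Field k] [IsAlgClosed k] [CharZero k] (d : ℕ) (hd : 2 ≤ d)
    (F : MvPolynomial (Fin 4) k) (hhom : F.IsHomogeneous d) (hirr : Irreducible F)
    (hlines : ∀ x : Fin 4 → k, x ≠ 0 → eval x F = 0 →
      (∃ L₁ L₂ : Submodule k (Fin 4 → k), L₁ ≠ L₂ ∧
        Module.finrank k L₁ = 2 ∧ Module.finrank k L₂ = 2 ∧ x ∈ L₁ ∧ x ∈ L₂ ∧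
        (∀ y ∈ L₁, eval y F = 0) ∧ (∀ y ∈ L₂, eval y F = 0)) ∨
      (∃ L : Submodule k (Fin 4 → k), Module.finrank k L = 2 ∧ x ∈ L ∧
        ∀ y ∈ L, eval y F = 0 ∧ ∀ i, eval y (pderiv i F) = 0)) :
    d = 2 ∧ ∀ x : Fin 4 → k, x ≠ 0 → eval x F = 0 → ∃ i, eval x (pderiv i F) ≠ 0 := by
  refine stmt_14_general hirr hhom hd fun x hx => ?_
  obtain ⟨L₁, L₂, hne, h₁, h₂, hx₁, hx₂, hF₁, hF₂⟩ | ⟨L, -, hxL, hL⟩ :=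
    hlines x (hx.ne_zero hhom hd) hx.eval_eq_zero
  · exact ⟨L₁, L₂, hne, ⟨h₁, hF₁⟩, ⟨h₂, hF₂⟩, hx₁, hx₂⟩
  · exact absurd hx.exists_pderiv_ne_zero (by simpa using (hL x hxL).2)
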